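/- Let q ∈ [2, 6] and r ∈ [1, 2) be real exponents. For every σ > 0 there exists a constant C_σ > 0 (depending only on σ, q, r) such that for every R > 0, every s, t with 3R/2 ≤ s < t ≤ 2R, every smooth vector field v : ℝ³ → ℝ³ and every smooth function θ : ℝ³ → ℝ, the quantity J₅ = (t−s)^{−1} ∫_{B_t∖B_s} |v| |θ − θ̄_R| dx satisfies J₅ ≤ σ ‖θ − θ̄_R‖²_{L^6(B_t∖B_R)} + C_σ (t−s)^{−2(6−r)/(6+r)} R^{3(q−2)(6−r)/(q(6+r))} ‖v‖_{L^q(B_{2R}∖B_R)}^{2(6−r)/(6+r)} ‖θ − θ̄_R‖_{L^r(B_{2R}∖B_R)}^{4r/(6+r)} (the inequality interpreted in the extended nonnegative reals). -/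

import Mathlib

/-!
With `w = θ - θ̄_R` and `A = B_t ∖ B_s`, Cauchy–Schwarz bounds `∫_A |v| |w|` by
`‖v‖_{L²(A)} ‖w‖_{L²(A)}`. Hölder on `A`, whose measure is at most a constant times `R³`, replaces
`‖v‖_{L²}` by `R^{3(1/2 - 1/q)} ‖v‖_{L^q}`, and interpolating `L²` between `L^r` and `L⁶` gives
`‖w‖_{L²} ≤ ‖w‖_{L^r}^a ‖w‖_{L⁶}^{1-a}` with `a = 2r / (6 - r)`. Young's inequality with the
conjugate exponents `2 / (1 - a)` and `2 / (1 + a)` then splits off `σ ‖w‖_{L⁶}²`.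
-/

open MeasureTheory Metric Filter
open scoped ENNReal NNReal

noncomputable section

/-- Euclidean `ℝ³`. -/
abbrev E3 := EuclideanSpace ℝ (Fin 3)

/-- The annulus `B_{2R} \ B_R` centered at the origin. -/
def Ann (R : ℝ) : Set E3 := ball (0 : E3) (2 * R) \ ball (0 : E3) R

/-- Mean value of `θ` over the annulus `B_{2R} \ B_R`. -/
def thetaBar (θ : E3 → ℝ) (R : ℝ) : ℝ := ⨍ x in Ann R, θ x

/-- `L^p` norm (with real exponent `p`) of `f` over the set `s`, valued in `ℝ≥0∞`. -/
def LpS {F : Type*} [NormedAddCommGroup F] (f : E3 → F) (p : ℝ) (s : Set E3) : ℝ≥0∞ :=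
  eLpNorm f (ENNReal.ofReal p) (volume.restrict s)

theorem inv_ofReal_eq_ofReal_div_add_ofReal_div {p r m a b : ℝ} (hp : 0 < p) (hr : 0 < r)
    (hm : 0 < m) (ha : 0 ≤ a) (hb : 0 ≤ b) (h : p⁻¹ = a / r + b / m) :
    (ENNReal.ofReal p)⁻¹ =
      ENNReal.ofReal a / ENNReal.ofReal r + ENNReal.ofReal b / ENNReal.ofReal m := by
  rw [← ENNReal.ofReal_div_of_pos hr, ← ENNReal.ofReal_div_of_pos hm,
    ← ENNReal.ofReal_add (by positivity) (by positivity), ← h, ENNReal.ofReal_inv_of_pos hp]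

theorem young_inequality_weighted {p q : ℝ} (hpq : p.HolderConjugate q) {σ : ℝ≥0∞} (hσ₀ : σ ≠ 0)
    (hσ : σ ≠ ∞) (a b : ℝ≥0∞) : a * b ≤ σ * a ^ p + σ ^ (-(q / p)) * b ^ q := by
  have hdiv {e : ℝ} (c : ℝ≥0∞) (he : 1 ≤ e) : c / ENNReal.ofReal e ≤ c :=
    ENNReal.div_le_of_le_mul (le_mul_of_one_le_right' (by simpa using he))
  calc a * b = (σ ^ p⁻¹ * a) * (σ ^ (-p⁻¹) * b) := by
        rw [mul_mul_mul_comm, ← ENNReal.rpow_add _ _ hσ₀ hσ, add_neg_cancel, ENNReal.rpow_zero,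
          one_mul]
    _ ≤ (σ ^ p⁻¹ * a) ^ p / ENNReal.ofReal p + (σ ^ (-p⁻¹) * b) ^ q / ENNReal.ofReal q :=
        ENNReal.young_inequality _ _ hpq
    _ ≤ (σ ^ p⁻¹ * a) ^ p + (σ ^ (-p⁻¹) * b) ^ q :=
        add_le_add (hdiv _ hpq.lt.le) (hdiv _ hpq.symm.lt.le)
    _ = σ * a ^ p + σ ^ (-(q / p)) * b ^ q := by
        rw [ENNReal.mul_rpow_of_nonneg _ _ hpq.nonneg,
          ENNReal.mul_rpow_of_nonneg _ _ hpq.symm.nonneg, ENNReal.rpow_inv_rpow hpq.ne_zero,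
          ← ENNReal.rpow_mul, neg_mul, inv_mul_eq_div]

section LebesgueNorms

variable {α F G : Type*} [MeasurableSpace α] {μ : Measure α}
  [NormedAddCommGroup F] [NormedAddCommGroup G]

theorem lintegral_enorm_mul_enorm_le_eLpNorm_mul_eLpNorm {p q : ℝ≥0∞} [ENNReal.HolderConjugate p q]
    {f : α → F} {g : α → G} (hf : AEStronglyMeasurable f μ) (hg : AEStronglyMeasurable g μ) :
    ∫⁻ x, ‖f x‖ₑ * ‖g x‖ₑ ∂μ ≤ eLpNorm f p μ * eLpNorm g q μ := by
  simpa [eLpNorm_one_eq_lintegral_enorm] using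
    eLpNorm_le_eLpNorm_mul_eLpNorm_of_nnnorm hf hg (r := 1) (fun a b => ‖a‖ * ‖b‖) 1
      (.of_forall fun x => by simp)

theorem eLpNorm_le_eLpNorm_rpow_mul_eLpNorm_rpow {p p₀ p₁ : ℝ≥0∞} {a b : ℝ} (ha : 0 < a)
    (hb : 0 < b) (hab : a + b = 1) (hp : p⁻¹ = ENNReal.ofReal a / p₀ + ENNReal.ofReal b / p₁)
    {f : α → F} (hf : AEStronglyMeasurable f μ) :
    eLpNorm f p μ ≤ eLpNorm f p₀ μ ^ a * eLpNorm f p₁ μ ^ b := by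
  have ha' : ENNReal.ofReal a ≠ 0 := by simpa using ha
  have hb' : ENNReal.ofReal b ≠ 0 := by simpa using hb
  have htriple : ENNReal.HolderTriple (p₀ / ENNReal.ofReal a) (p₁ / ENNReal.ofReal b) p :=
    ⟨by rw [ENNReal.inv_div (by simp) (.inl ha'), ENNReal.inv_div (by simp) (.inl hb'), hp]⟩
  have hmeas {c : ℝ} (hc : 0 < c) : AEStronglyMeasurable (fun x => ‖f x‖ ^ c) μ :=
    (Real.continuous_rpow_const hc.le).comp_aestronglyMeasurable hf.norm
  have hsplit (x : α) : ‖f x‖ = ‖f x‖ ^ a * ‖f x‖ ^ b := by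
    rw [← Real.rpow_add_of_nonneg (norm_nonneg _) ha.le hb.le, hab, Real.rpow_one]
  calc eLpNorm f p μ = eLpNorm ((fun x => ‖f x‖ ^ a) • fun x => ‖f x‖ ^ b) p μ :=
        eLpNorm_congr_norm_ae (.of_forall fun x => by
          rw [Pi.smul_apply', smul_eq_mul, ← hsplit, norm_norm])
    _ ≤ eLpNorm (fun x => ‖f x‖ ^ a) (p₀ / ENNReal.ofReal a) μ *
          eLpNorm (fun x => ‖f x‖ ^ b) (p₁ / ENNReal.ofReal b) μ :=
        eLpNorm_smul_le_mul_eLpNorm (hmeas hb) (hmeas ha)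
    _ = eLpNorm f p₀ μ ^ a * eLpNorm f p₁ μ ^ b := by
        rw [eLpNorm_norm_rpow f ha, eLpNorm_norm_rpow f hb,
          ENNReal.div_mul_cancel ha' ENNReal.ofReal_ne_top,
          ENNReal.div_mul_cancel hb' ENNReal.ofReal_ne_top]

theorem mul_lintegral_enorm_mul_le_eLpNorm_sq_add {q r m σ : ℝ≥0∞} {a : ℝ} (hq : 2 ≤ q)
    (ha₀ : 0 < a) (ha₁ : a < 1) (ha : 2⁻¹ = ENNReal.ofReal a / r + ENNReal.ofReal (1 - a) / m)
    (hσ₀ : σ ≠ 0) (hσ : σ ≠ ∞) (k : ℝ≥0∞) {v : α → F} {w : α → G} (hv : AEStronglyMeasurable v μ)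
    (hw : AEStronglyMeasurable w μ) :
    k * ∫⁻ x, ‖v x‖ₑ * ‖w x‖ₑ ∂μ ≤
      σ * eLpNorm w m μ ^ 2 + σ ^ (-((1 - a) / (1 + a))) *
        (k * μ Set.univ ^ (1 / 2 - 1 / q.toReal) * eLpNorm v q μ * eLpNorm w r μ ^ a) ^
          (2 / (1 + a)) := by
  have : 0 < 1 + a := by linarith
  have hneg : 0 < 1 - a := by linarith
  have hconj : (2 / (1 - a)).HolderConjugate (2 / (1 + a)) :=
    Real.holderConjugate_iff.mpr ⟨by rw [lt_div_iff₀ hneg]; linarith, by field_simp; ring⟩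
  have hvq : eLpNorm v 2 μ ≤ eLpNorm v q μ * μ Set.univ ^ (1 / 2 - 1 / q.toReal) := by
    simpa using eLpNorm_le_eLpNorm_mul_rpow_measure_univ hq hv
  have hwm : (eLpNorm w m μ ^ (1 - a)) ^ (2 / (1 - a)) = eLpNorm w m μ ^ 2 := by
    rw [← ENNReal.rpow_mul, mul_div_cancel₀ _ hneg.ne', ENNReal.rpow_two]
  calc k * ∫⁻ x, ‖v x‖ₑ * ‖w x‖ₑ ∂μ ≤ k * (eLpNorm v 2 μ * eLpNorm w 2 μ) := by
        gcongr
        exact lintegral_enorm_mul_enorm_le_eLpNorm_mul_eLpNorm hv hw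
    _ ≤ k * ((eLpNorm v q μ * μ Set.univ ^ (1 / 2 - 1 / q.toReal)) *
          (eLpNorm w r μ ^ a * eLpNorm w m μ ^ (1 - a))) := by
        gcongr
        exact eLpNorm_le_eLpNorm_rpow_mul_eLpNorm_rpow ha₀ hneg (by ring) ha hw
    _ = eLpNorm w m μ ^ (1 - a) *
          (k * μ Set.univ ^ (1 / 2 - 1 / q.toReal) * eLpNorm v q μ * eLpNorm w r μ ^ a) := by
        ring
    _ ≤ _ := by
        have hyoung := young_inequality_weighted hconj hσ₀ hσ (eLpNorm w m μ ^ (1 - a))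
          (k * μ Set.univ ^ (1 / 2 - 1 / q.toReal) * eLpNorm v q μ * eLpNorm w r μ ^ a)
        rwa [hwm, div_div_div_cancel_left' _ _ two_ne_zero] at hyoung

end LebesgueNorms

section HaarMeasure

variable {E F G : Type*} [NormedAddCommGroup E] [NormedSpace ℝ E] [FiniteDimensional ℝ E]
  [MeasurableSpace E] [BorelSpace E] (μ : Measure E) [μ.IsAddHaarMeasure]
  [NormedAddCommGroup F] [NormedAddCommGroup G]

theorem inv_mul_lintegral_enorm_mul_le_of_subset_ball {q r m σ : ℝ≥0∞} {a : ℝ} (hq : 2 ≤ q)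
    (ha₀ : 0 < a) (ha₁ : a < 1) (ha : 2⁻¹ = ENNReal.ofReal a / r + ENNReal.ofReal (1 - a) / m)
    (hσ₀ : σ ≠ 0) (hσ : σ ≠ ∞) {δ R κ : ℝ} (hδ : 0 < δ) (hR : 0 < R) {x₀ : E} {A : Set E}
    (hA : A ⊆ ball x₀ (κ * R)) {v : E → F} {w : E → G}
    (hv : AEStronglyMeasurable v (μ.restrict A)) (hw : AEStronglyMeasurable w (μ.restrict A)) :
    ENNReal.ofReal δ⁻¹ * ∫⁻ x in A, ‖v x‖ₑ * ‖w x‖ₑ ∂μ ≤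
      σ * eLpNorm w m (μ.restrict A) ^ 2 +
        σ ^ (-((1 - a) / (1 + a))) * μ (ball 0 κ) ^ ((1 / 2 - 1 / q.toReal) * (2 / (1 + a))) *
          ENNReal.ofReal (δ ^ (-(2 / (1 + a)))) *
          ENNReal.ofReal
            (R ^ (Module.finrank ℝ E * (1 / 2 - 1 / q.toReal) * (2 / (1 + a)))) *
          eLpNorm v q (μ.restrict A) ^ (2 / (1 + a)) *
          eLpNorm w r (μ.restrict A) ^ (a * (2 / (1 + a))) := by
  set e := 1 / 2 - 1 / q.toReal with he
  set p := 2 / (1 + a)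
  have he₀ : 0 ≤ e := by
    simpa [he] using ENNReal.toReal_mono (by simp) (ENNReal.inv_le_inv.mpr hq)
  have hp₀ : 0 ≤ p := by positivity
  have hvol : (μ.restrict A) Set.univ ≤
      ENNReal.ofReal (R ^ Module.finrank ℝ E) * μ (ball 0 κ) := by
    rw [Measure.restrict_apply_univ, ← Measure.addHaar_ball_mul_of_pos μ x₀ hR κ]
    exact measure_mono (by rwa [mul_comm R κ])
  have hRpow : ENNReal.ofReal (R ^ Module.finrank ℝ E) ^ (e * p) =
      ENNReal.ofReal (R ^ (Module.finrank ℝ E * e * p)) := by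
    rw [ENNReal.ofReal_rpow_of_pos (by positivity), ← Real.rpow_natCast, ← Real.rpow_mul hR.le,
      mul_assoc]
  have hδpow : ENNReal.ofReal δ⁻¹ ^ p = ENNReal.ofReal (δ ^ (-p)) := by
    rw [ENNReal.ofReal_rpow_of_pos (by positivity), Real.inv_rpow hδ.le, Real.rpow_neg hδ.le]
  refine (mul_lintegral_enorm_mul_le_eLpNorm_sq_add hq ha₀ ha₁ ha hσ₀ hσ _ hv hw).trans
    (add_le_add_right ?_ _)
  calc _ ≤ σ ^ (-((1 - a) / (1 + a))) *
        (ENNReal.ofReal δ⁻¹ * (ENNReal.ofReal (R ^ Module.finrank ℝ E) * μ (ball 0 κ)) ^ e *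
          eLpNorm v q (μ.restrict A) * eLpNorm w r (μ.restrict A) ^ a) ^ p := by
        gcongr
    _ = _ := by
        simp only [ENNReal.mul_rpow_of_nonneg _ _ hp₀, ENNReal.mul_rpow_of_nonneg _ _ he₀,
          ← ENNReal.rpow_mul, hRpow, hδpow]
        ring

theorem exists_inv_mul_lintegral_mul_le_of_subset_ball {q r : ℝ} (hq : 2 ≤ q) (hr₀ : 0 < r)
    (hr₂ : r < 2) {σ κ : ℝ} (hσ : 0 < σ) (hκ : 0 < κ) :
    ∃ C : ℝ, 0 < C ∧ ∀ {δ R : ℝ}, 0 < δ → 0 < R → ∀ {x₀ : E} {A : Set E}, A ⊆ ball x₀ (κ * R) →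
      ∀ {v : E → F} {w : E → G}, AEStronglyMeasurable v (μ.restrict A) →
        AEStronglyMeasurable w (μ.restrict A) →
        ENNReal.ofReal δ⁻¹ * ∫⁻ x in A, ENNReal.ofReal (‖v x‖ * ‖w x‖) ∂μ
        ≤ ENNReal.ofReal σ * eLpNorm w (ENNReal.ofReal 6) (μ.restrict A) ^ 2
          + ENNReal.ofReal C * ENNReal.ofReal (δ ^ (-(2 * (6 - r) / (6 + r)))) *
              ENNReal.ofReal
                (R ^ (Module.finrank ℝ E * (q - 2) * (6 - r) / (q * (6 + r)))) *
              eLpNorm v (ENNReal.ofReal q) (μ.restrict A) ^ (2 * (6 - r) / (6 + r)) *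
              eLpNorm w (ENNReal.ofReal r) (μ.restrict A) ^ (4 * r / (6 + r)) := by
  have h6r : 0 < 6 - r := by linarith
  set a := 2 * r / (6 - r) with ha
  have ha₀ : 0 < a := by positivity
  have ha₁ : a < 1 := by rw [ha, div_lt_one h6r]; linarith
  have hinterp : (2 : ℝ)⁻¹ = a / r + (1 - a) / 6 := by
    rw [ha]
    field_simp
    ring
  have hinterp' : 2⁻¹ = ENNReal.ofReal a / ENNReal.ofReal r +
      ENNReal.ofReal (1 - a) / ENNReal.ofReal 6 := by
    simpa only [ENNReal.ofReal_ofNat] using inv_ofReal_eq_ofReal_div_add_ofReal_div two_pos hr₀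
      (by norm_num) ha₀.le (by linarith) hinterp
  have hq' : 2 ≤ ENNReal.ofReal q := by simpa using hq
  have hp : 2 / (1 + a) = 2 * (6 - r) / (6 + r) := by
    rw [ha]
    field_simp
    ring
  have hap : a * (2 * (6 - r) / (6 + r)) = 4 * r / (6 + r) := by
    rw [ha]
    field_simp
    ring
  have hRexp : Module.finrank ℝ E * (1 / 2 - 1 / q) * (2 * (6 - r) / (6 + r)) =
      Module.finrank ℝ E * (q - 2) * (6 - r) / (q * (6 + r)) := by
    field_simp
  set M := (μ (ball 0 κ)).toReal
  have hM₀ : 0 < M := ENNReal.toReal_pos (measure_ball_pos μ 0 hκ).ne' measure_ball_lt_top.ne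
  have hMμ : μ (ball 0 κ) = ENNReal.ofReal M := (ENNReal.ofReal_toReal measure_ball_lt_top.ne).symm
  refine ⟨σ ^ (-((1 - a) / (1 + a))) * M ^ ((1 / 2 - 1 / q) * (2 * (6 - r) / (6 + r))),
    by positivity, fun hδ hR _ _ hA _ _ hv hw => ?_⟩
  have h := inv_mul_lintegral_enorm_mul_le_of_subset_ball μ hq' ha₀ ha₁ hinterp'
    (by simpa using hσ) ENNReal.ofReal_ne_top hδ hR hA hv hw
  rw [hp, hap, hMμ, ENNReal.toReal_ofReal (by linarith), hRexp, ENNReal.ofReal_rpow_of_pos hσ,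
    ENNReal.ofReal_rpow_of_pos hM₀, ← ENNReal.ofReal_mul (by positivity)] at h
  simpa only [ENNReal.ofReal_mul (norm_nonneg _), ofReal_norm] using h

theorem J5_estimate_v_general {q r : ℝ} (hq : 2 ≤ q) (hr₀ : 0 < r) (hr₂ : r < 2) {σ : ℝ}
    (hσ : 0 < σ) :
    ∃ C : ℝ, 0 < C ∧ ∀ (x₀ : E) (R s t : ℝ), R ≤ s → s < t → t ≤ 2 * R →
      ∀ (v : E → F) (w : E → G),
        AEStronglyMeasurable v (μ.restrict (ball x₀ (2 * R) \ ball x₀ R)) →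
        AEStronglyMeasurable w (μ.restrict (ball x₀ (2 * R) \ ball x₀ R)) →
        ENNReal.ofReal (t - s)⁻¹ *
          ∫⁻ x in ball x₀ t \ ball x₀ s, ENNReal.ofReal (‖v x‖ * ‖w x‖) ∂μ
        ≤ ENNReal.ofReal σ *
            eLpNorm w (ENNReal.ofReal 6) (μ.restrict (ball x₀ t \ ball x₀ R)) ^ 2
          + ENNReal.ofReal C * ENNReal.ofReal ((t - s) ^ (-(2 * (6 - r) / (6 + r)))) *
              ENNReal.ofReal
                (R ^ (Module.finrank ℝ E * (q - 2) * (6 - r) / (q * (6 + r)))) *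
              eLpNorm v (ENNReal.ofReal q) (μ.restrict (ball x₀ (2 * R) \ ball x₀ R)) ^
                (2 * (6 - r) / (6 + r)) *
              eLpNorm w (ENNReal.ofReal r) (μ.restrict (ball x₀ (2 * R) \ ball x₀ R)) ^
                (4 * r / (6 + r)) := by
  obtain ⟨C, hC, h⟩ :=
    exists_inv_mul_lintegral_mul_le_of_subset_ball (F := F) (G := G) μ hq hr₀ hr₂ hσ two_pos
  refine ⟨C, hC, fun x₀ R s t hRs hst ht v w hv hw => ?_⟩
  have h6r : 0 < 6 - r := by linarith
  have hA : ball x₀ t \ ball x₀ s ⊆ ball x₀ (2 * R) \ ball x₀ R :=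
    Set.sdiff_subset_sdiff (ball_subset_ball ht) (ball_subset_ball hRs)
  have hA₆ : ball x₀ t \ ball x₀ s ⊆ ball x₀ t \ ball x₀ R :=
    Set.sdiff_subset_sdiff_right (ball_subset_ball hRs)
  refine (h (sub_pos.mpr hst) (by linarith) (hA.trans Set.sdiff_subset)
    (hv.mono_measure (Measure.restrict_mono_set μ hA))
    (hw.mono_measure (Measure.restrict_mono_set μ hA))).trans ?_
  gcongr

end HaarMeasure

theorem J5_estimate_v (q r : ℝ) (hq : 2 ≤ q ∧ q ≤ 6) (hr : 1 ≤ r ∧ r < 2) :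
    ∀ σ : ℝ, 0 < σ → ∃ Cσ : ℝ, 0 < Cσ ∧
      ∀ R s t : ℝ, 0 < R → 3 * R / 2 ≤ s → s < t → t ≤ 2 * R →
      ∀ v : E3 → E3, ∀ θ : E3 → ℝ, ContDiff ℝ (⊤ : ℕ∞) v → ContDiff ℝ (⊤ : ℕ∞) θ →
        ENNReal.ofReal ((t - s)⁻¹) *
          ∫⁻ x in ball (0 : E3) t \ ball (0 : E3) s,
            ENNReal.ofReal (‖v x‖ * |θ x - thetaBar θ R|)
        ≤ ENNReal.ofReal σ * LpS (fun x => θ x - thetaBar θ R) 6 (ball (0 : E3) t \ ball (0 : E3) R) ^ 2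
          + ENNReal.ofReal Cσ * ENNReal.ofReal ((t - s) ^ (-(2 * (6 - r) / (6 + r)))) *
              ENNReal.ofReal (R ^ (3 * (q - 2) * (6 - r) / (q * (6 + r)))) *
              LpS v q (Ann R) ^ (2 * (6 - r) / (6 + r)) *
              LpS (fun x => θ x - thetaBar θ R) r (Ann R) ^ (4 * r / (6 + r)) := by
  intro σ hσ
  obtain ⟨C, hC, h⟩ := J5_estimate_v_general (F := E3) (G := ℝ) (volume : Measure E3) hq.1
    (by linarith) hr.2 hσ
  exact ⟨C, hC, fun R s t _ hs hst ht v θ hv hθ => by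
    simpa [LpS, Ann] using h 0 R s t (by linarith) hst ht v (fun x => θ x - thetaBar θ R)
      hv.continuous.aestronglyMeasurable
      (hθ.continuous.sub continuous_const).aestronglyMeasurable⟩
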